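/- Let a, b be real parameters and let π′ be the bivector on ℝ⁴ (coordinates (φ,θ,p_φ,p_θ)) defined by {φ,p_φ}_{π′} = φ, {θ,p_θ}_{π′} = θ, and all other coordinate brackets zero. Then: (i) π′ is a Poisson bivector compatible with the canonical bivector P; (ii) the Lagrange top integrals H₁ = (a + cos²θ/sin²θ) p_φ² + p_θ² + b cos θ (which equals J₁² + J₂² + aJ₃² + b x₃ in the spherical realization) and H₂ = p_φ² (which equals J₃²) satisfy both {H₁,H₂}_P = 0 and {H₁,H₂}_{π′} = 0 on the set where sin θ ≠ 0. -/

import Mathlib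

open Real

/-- Partial derivative in the `i`-th coordinate direction on `ℝ⁴`
(coordinates `z 0 = φ`, `z 1 = θ`, `z 2 = p_φ`, `z 3 = p_θ`). -/
noncomputable def pd (i : Fin 4) (F : (Fin 4 → ℝ) → ℝ) (z : Fin 4 → ℝ) : ℝ :=
  fderiv ℝ F z (Pi.single i 1)

/-- The Poisson bracket of `F` and `G` defined by a bivector `π`. -/
noncomputable def pbiv (Pv : (Fin 4 → ℝ) → Matrix (Fin 4) (Fin 4) ℝ)
    (F G : (Fin 4 → ℝ) → ℝ) (z : Fin 4 → ℝ) : ℝ :=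
  ∑ i : Fin 4, ∑ j : Fin 4, Pv z i j * pd i F z * pd j G z

/-- A bivector `π` satisfies the Jacobi identity (is a Poisson bivector) on `U`. -/
def IsPoissonOn (Pv : (Fin 4 → ℝ) → Matrix (Fin 4) (Fin 4) ℝ)
    (U : Set (Fin 4 → ℝ)) : Prop :=
  ∀ z ∈ U, ∀ i j k : Fin 4,
    (∑ l : Fin 4, (Pv z l i * pd l (fun w => Pv w j k) z
      + Pv z l j * pd l (fun w => Pv w k i) z
      + Pv z l k * pd l (fun w => Pv w i j) z)) = 0

/-- The antisymmetric matrix with the given upper-triangular entries: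
`a = {φ,θ}`, `b = {φ,p_φ}`, `c = {φ,p_θ}`, `d = {θ,p_φ}`, `e = {θ,p_θ}`, `f = {p_φ,p_θ}`. -/
noncomputable def skew (a b c d e f : ℝ) : Matrix (Fin 4) (Fin 4) ℝ :=
  !![0, a, b, c; -a, 0, d, e; -b, -d, 0, f; -c, -e, -f, 0]

/-- The canonical Poisson bivector: `{φ,p_φ} = {θ,p_θ} = 1`, all other brackets zero. -/
noncomputable def Pcan : Matrix (Fin 4) (Fin 4) ℝ :=
  !![0, 0, 1, 0; 0, 0, 0, 1; -1, 0, 0, 0; 0, -1, 0, 0]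

/-- The canonical Poisson bracket on functions of `(φ, θ, p_φ, p_θ)`. -/
noncomputable def pb (F G : (Fin 4 → ℝ) → ℝ) (z : Fin 4 → ℝ) : ℝ :=
  pd 0 F z * pd 2 G z - pd 2 F z * pd 0 G z + pd 1 F z * pd 3 G z - pd 3 F z * pd 1 G z

noncomputable def x3 (z : Fin 4 → ℝ) : ℝ := cos (z 1)
noncomputable def J1 (z : Fin 4 → ℝ) : ℝ := sin (z 0) * cos (z 1) / sin (z 1) * z 2 - cos (z 0) * z 3
noncomputable def J2 (z : Fin 4 → ℝ) : ℝ := cos (z 0) * cos (z 1) / sin (z 1) * z 2 + sin (z 0) * z 3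
noncomputable def J3 (z : Fin 4 → ℝ) : ℝ := -(z 2)

/-- The bivector `π′` of the Lagrange top: `{φ,p_φ} = φ`, `{θ,p_θ} = θ`,
all other coordinate brackets zero. -/
noncomputable def piLag (z : Fin 4 → ℝ) : Matrix (Fin 4) (Fin 4) ℝ :=
  skew 0 (z 0) 0 0 (z 1) 0

/-!
The coordinates split into the two conjugate pairs `(φ, p_φ)` and `(θ, p_θ)`, and `P`, `π′` and
`P + π′` are all products of two bivectors, each living on one of these planes. Every bivector on
a plane is Poisson, and so is a product of two: for distinct `i`, `j`, `k`, the bracket `{zⱼ, zₖ}`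
is zero unless `zⱼ` and `zₖ` are conjugate, and then it does not involve the coordinate conjugate
to `zᵢ`, so every term of the Jacobi identity vanishes. For a product bivector,
`{F, G(p_φ)} = {φ, p_φ} ∂F/∂φ G′(p_φ)`, which is zero for `F = H₁`.
-/

open Function in
theorem pd_eq_deriv_update {i : Fin 4} {F : (Fin 4 → ℝ) → ℝ} {z : Fin 4 → ℝ}
    (hF : DifferentiableAt ℝ F z) : pd i F z = deriv (fun t => F (update z i t)) (z i) := by
  have hF' : HasFDerivAt F (fderiv ℝ F z) (update z i (z i)) := by
    simpa only [update_eq_self] using hF.hasFDerivAt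
  exact (hF'.comp_hasDerivAt (z i) (hasDerivAt_update z i (z i))).deriv.symm

theorem pd_eq_zero_of_forall_update {i : Fin 4} {F : (Fin 4 → ℝ) → ℝ} {z : Fin 4 → ℝ}
    (h : ∀ t, F (Function.update z i t) = F z) : pd i F z = 0 := by
  by_cases hF : DifferentiableAt ℝ F z
  · simp only [pd_eq_deriv_update hF, h, deriv_const]
  · simp only [pd, fderiv_zero_of_not_differentiableAt hF, zero_apply]

theorem pd_neg (i : Fin 4) (F : (Fin 4 → ℝ) → ℝ) (z : Fin 4 → ℝ) :
    pd i (fun w => -F w) z = -pd i F z := by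
  simp only [pd, fderiv_fun_neg, neg_apply]

section Jacobiator

open scoped Matrix

variable {Pv : (Fin 4 → ℝ) → Matrix (Fin 4) (Fin 4) ℝ}

/-- The Jacobiator `{{zⱼ, zₖ}, zᵢ} + {{zₖ, zᵢ}, zⱼ} + {{zᵢ, zⱼ}, zₖ}` of the coordinate functions,
whose vanishing is the Jacobi identity. It is written with the same sum as in `IsPoissonOn`, so that
the two agree definitionally. -/
noncomputable def jacobiator (Pv : (Fin 4 → ℝ) → Matrix (Fin 4) (Fin 4) ℝ) (i j k : Fin 4)
    (z : Fin 4 → ℝ) : ℝ :=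
  ∑ l : Fin 4, (Pv z l i * pd l (fun w => Pv w j k) z
    + Pv z l j * pd l (fun w => Pv w k i) z
    + Pv z l k * pd l (fun w => Pv w i j) z)

theorem jacobiator_rotate (i j k : Fin 4) (z : Fin 4 → ℝ) :
    jacobiator Pv j k i z = jacobiator Pv i j k z :=
  Finset.sum_congr rfl fun _ _ => by ring

theorem jacobiator_self_left (hPv : ∀ w, (Pv w)ᵀ = -Pv w) (i k : Fin 4)
    (z : Fin 4 → ℝ) : jacobiator Pv i i k z = 0 := by
  have antisymm (w : Fin 4 → ℝ) (m n : Fin 4) : Pv w m n = -Pv w n m := congrFun₂ (hPv w) n m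
  have diag (w : Fin 4 → ℝ) : Pv w i i = 0 := self_eq_neg.mp (antisymm w i i)
  have pd_diag (l : Fin 4) : pd l (fun w => Pv w i i) z = 0 :=
    pd_eq_zero_of_forall_update fun _ => by simp only [diag]
  have pd_swap (l : Fin 4) : pd l (fun w => Pv w k i) z = -pd l (fun w => Pv w i k) z := by
    simp only [antisymm _ k i, pd_neg]
  refine Finset.sum_eq_zero fun l _ => ?_
  rw [pd_diag, pd_swap]
  ring

theorem isPoissonOn_of_jacobiator_eq_zero {U : Set (Fin 4 → ℝ)}
    (hPv : ∀ w, (Pv w)ᵀ = -Pv w)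
    (h : ∀ z ∈ U, ∀ i j k, i ≠ j → j ≠ k → k ≠ i → jacobiator Pv i j k z = 0) :
    IsPoissonOn Pv U := by
  intro z hz i j k
  change jacobiator Pv i j k z = 0
  rcases eq_or_ne i j with rfl | hij
  · exact jacobiator_self_left hPv i k z
  rcases eq_or_ne j k with rfl | hjk
  · rw [← jacobiator_rotate, jacobiator_self_left hPv]
  rcases eq_or_ne k i with rfl | hki
  · rw [jacobiator_rotate k k j, jacobiator_self_left hPv]
  exact h z hz i j k hij hjk hki

end Jacobiator

/-- The product of the bivectors `f` on the `(φ, p_φ)`-plane and `g` on the `(θ, p_θ)`-plane: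
`{φ, p_φ} = f φ p_φ`, `{θ, p_θ} = g θ p_θ`, all other coordinate brackets zero. The canonical
bivector, `piLag` and their sum are of this form. -/
noncomputable def productBivector (f g : ℝ → ℝ → ℝ) (z : Fin 4 → ℝ) : Matrix (Fin 4) (Fin 4) ℝ :=
  skew 0 (f (z 0) (z 2)) 0 0 (g (z 1) (z 3)) 0

theorem piLag_eq_productBivector : piLag = productBivector (fun q _ => q) (fun q _ => q) := rfl

theorem Pcan_eq_productBivector (z : Fin 4 → ℝ) :
    Pcan = productBivector (fun _ _ => 1) (fun _ _ => 1) z := by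
  simp only [Pcan, productBivector, skew, neg_zero]

section ProductBivector

open scoped Matrix

variable (f g : ℝ → ℝ → ℝ)

theorem productBivector_add (f' g' : ℝ → ℝ → ℝ) (z : Fin 4 → ℝ) :
    productBivector f g z + productBivector f' g' z = productBivector (f + f') (g + g') z := by
  ext i j
  fin_cases i <;> fin_cases j <;> simp [productBivector, skew, add_comm]

theorem transpose_productBivector (z : Fin 4 → ℝ) :
    (productBivector f g z)ᵀ = -productBivector f g z := by
  ext i j
  fin_cases i <;> fin_cases j <;> simp [productBivector, skew]

-- In `Fin 4`, the coordinate conjugate to `j` is `j + 2`.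
theorem productBivector_apply_eq_zero {j k : Fin 4} (hjk : k ≠ j + 2) (z : Fin 4 → ℝ) :
    productBivector f g z j k = 0 := by
  fin_cases j <;> fin_cases k <;> first | exact absurd rfl hjk | simp [productBivector, skew]

theorem pd_productBivector_eq_zero {l j k : Fin 4} (hj : l ≠ j) (hk : l ≠ k) (z : Fin 4 → ℝ) :
    pd l (fun w => productBivector f g w j k) z = 0 := by
  refine pd_eq_zero_of_forall_update fun t => ?_
  fin_cases j <;> fin_cases k <;> simp_all [productBivector, skew, Function.update_of_ne, Ne.symm]

theorem productBivector_mul_pd_eq_zero {i j k : Fin 4} (hij : i ≠ j) (hik : i ≠ k) (l : Fin 4)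
    (z : Fin 4 → ℝ) :
    productBivector f g z l i * pd l (fun w => productBivector f g w j k) z = 0 := by
  by_cases hli : i = l + 2
  · by_cases hjk : k = j + 2
    · have hlj : l ≠ j := fun h => hik (by rw [hli, hjk, h])
      have hlk : l ≠ k := by grind
      rw [pd_productBivector_eq_zero f g hlj hlk, mul_zero]
    · have hpd : pd l (fun w => productBivector f g w j k) z = 0 :=
        pd_eq_zero_of_forall_update fun _ => by
          simp only [productBivector_apply_eq_zero f g hjk]
      rw [hpd, mul_zero]
  · rw [productBivector_apply_eq_zero f g hli, zero_mul]

theorem isPoissonOn_productBivector (U : Set (Fin 4 → ℝ)) :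
    IsPoissonOn (productBivector f g) U := by
  refine isPoissonOn_of_jacobiator_eq_zero (transpose_productBivector f g)
    fun z _ i j k hij hjk hki => Finset.sum_eq_zero fun l _ => ?_
  rw [productBivector_mul_pd_eq_zero f g hij hki.symm,
    productBivector_mul_pd_eq_zero f g hjk hij.symm,
    productBivector_mul_pd_eq_zero f g hki hjk.symm, add_zero, add_zero]

theorem pbiv_productBivector (F G : (Fin 4 → ℝ) → ℝ) (z : Fin 4 → ℝ) :
    pbiv (productBivector f g) F G z =
      f (z 0) (z 2) * (pd 0 F z * pd 2 G z - pd 2 F z * pd 0 G z) +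
        g (z 1) (z 3) * (pd 1 F z * pd 3 G z - pd 3 F z * pd 1 G z) := by
  simp [pbiv, Fin.sum_univ_four, productBivector, skew]
  ring

theorem pbiv_productBivector_eq_zero {F G : (Fin 4 → ℝ) → ℝ} {z : Fin 4 → ℝ}
    (hF : pd 0 F z = 0) (hG : ∀ i ≠ 2, pd i G z = 0) :
    pbiv (productBivector f g) F G z = 0 := by
  rw [pbiv_productBivector, hF, hG 0 (by decide), hG 1 (by decide), hG 3 (by decide)]
  ring

end ProductBivector

theorem isPoissonOn_piLag (U : Set (Fin 4 → ℝ)) : IsPoissonOn piLag U :=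
  piLag_eq_productBivector ▸ isPoissonOn_productBivector _ _ U

theorem isPoissonOn_Pcan_add_piLag (U : Set (Fin 4 → ℝ)) :
    IsPoissonOn (fun z => Pcan + piLag z) U := by
  have sum_eq : (fun z => Pcan + piLag z) =
      productBivector ((fun _ _ => 1) + fun q _ => q) ((fun _ _ => 1) + fun q _ => q) := by
    funext z
    rw [Pcan_eq_productBivector z, piLag_eq_productBivector, productBivector_add]
  exact sum_eq ▸ isPoissonOn_productBivector _ _ U

theorem pb_eq_pbiv_productBivector (F G : (Fin 4 → ℝ) → ℝ) (z : Fin 4 → ℝ) :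
    pb F G z = pbiv (productBivector (fun _ _ => 1) (fun _ _ => 1)) F G z := by
  rw [pbiv_productBivector, pb]
  ring

theorem J1_sq_add_J2_sq (z : Fin 4 → ℝ) :
    J1 z ^ 2 + J2 z ^ 2 = cos (z 1) ^ 2 / sin (z 1) ^ 2 * z 2 ^ 2 + z 3 ^ 2 := by
  unfold J1 J2
  linear_combination
    (cos (z 1) ^ 2 / sin (z 1) ^ 2 * z 2 ^ 2 + z 3 ^ 2) * sin_sq_add_cos_sq (z 0)

theorem statement5 (a b : ℝ) :
    IsPoissonOn piLag Set.univ ∧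
    IsPoissonOn (fun z => Pcan + piLag z) Set.univ ∧
    ∀ z : Fin 4 → ℝ, sin (z 1) ≠ 0 →
      ((a + cos (z 1) ^ 2 / sin (z 1) ^ 2) * z 2 ^ 2 + z 3 ^ 2 + b * cos (z 1)
          = J1 z ^ 2 + J2 z ^ 2 + a * J3 z ^ 2 + b * x3 z) ∧
      (z 2 ^ 2 = J3 z ^ 2) ∧
      pb (fun w => (a + cos (w 1) ^ 2 / sin (w 1) ^ 2) * w 2 ^ 2 + w 3 ^ 2 + b * cos (w 1))
        (fun w => w 2 ^ 2) z = 0 ∧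
      pbiv piLag (fun w => (a + cos (w 1) ^ 2 / sin (w 1) ^ 2) * w 2 ^ 2 + w 3 ^ 2 + b * cos (w 1))
        (fun w => w 2 ^ 2) z = 0 := by
  refine ⟨isPoissonOn_piLag _, isPoissonOn_Pcan_add_piLag _, fun z _ => ?_⟩
  have pd_H₁ : pd 0 (fun w => (a + cos (w 1) ^ 2 / sin (w 1) ^ 2) * w 2 ^ 2 + w 3 ^ 2
      + b * cos (w 1)) z = 0 :=
    pd_eq_zero_of_forall_update fun _ => by simp
  have pd_H₂ (i : Fin 4) (hi : i ≠ 2) : pd i (fun w => w 2 ^ 2) z = 0 :=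
    pd_eq_zero_of_forall_update fun _ => by simp [hi.symm]
  refine ⟨?_, (neg_sq (z 2)).symm, ?_, ?_⟩
  · rw [J1_sq_add_J2_sq, J3, x3]
    ring
  · rw [pb_eq_pbiv_productBivector]
    exact pbiv_productBivector_eq_zero _ _ pd_H₁ pd_H₂
  · rw [piLag_eq_productBivector]
    exact pbiv_productBivector_eq_zero _ _ pd_H₁ pd_H₂
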